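/- arXiv:2006.12897 — 2 statements merged into one kernel-verified Lean document; each statement's English description precedes it below -/
import Mathlib

section
/- Let (V,dist) be a metric space, let ρ > 0, let i ≥ 1 be an integer, and let I ⊆ V be a nonempty finite set. For a real x ≥ 0 and an integer j, let ⟨x⟩_j = min{(69+δ)·ρ·2^j : δ ∈ ℕ and δ·ρ·2^j ≥ x}. For distinct u, v ∈ V define dist'(v,u) = min_{p∈I} (dist(v,p) + ⟨dist(p,u)⟩_i). Suppose there exists p' ∈ I with dist(v,p') + dist(p',u) ≤ dist(v,u) + 68·ρ·2^i. Then: (a) dist'(v,u) ≤ dist(v,u) + 138·ρ·2^i; and (b) for every integer j ≥ i+1 and every p ∈ V, dist'(v,u) ≤ dist(v,p) + ⟨dist(p,u)⟩_j. -/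
/-- `⟨x⟩_j`: `x` rounded up to the next multiple of `ρ·2^j` and shifted by `69·ρ·2^j`. -/
noncomputable def roundDist (ρ : ℝ) (j : ℤ) (x : ℝ) : ℝ :=
  sInf {y | ∃ δ : ℕ, y = (69 + (δ : ℝ)) * (ρ * 2 ^ j) ∧ x ≤ (δ : ℝ) * (ρ * 2 ^ j)}

/-!
Rounding at level `j` adds between `69·ρ·2^j` and `70·ρ·2^j`. Going through a point whose detour is
at most `68·ρ·2^i` therefore costs at most `(68 + 70)·ρ·2^i = 138·ρ·2^i` more than the distance,
while any rounding at a level `j > i` already adds `69·ρ·2^j ≥ 69·2·ρ·2^i = 138·ρ·2^i`.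
-/

section roundDist

variable {ρ : ℝ}

theorem roundDist_eq_natCeil (hρ : 0 < ρ) (j : ℤ) (x : ℝ) :
    roundDist ρ j x = (69 + (⌈x / (ρ * 2 ^ j)⌉₊ : ℝ)) * (ρ * 2 ^ j) := by
  have hunit : 0 < ρ * 2 ^ j := by positivity
  refine IsLeast.csInf_eq ⟨⟨_, rfl, (div_le_iff₀ hunit).mp (Nat.le_ceil _)⟩, ?_⟩
  rintro _ ⟨δ, rfl, hδ⟩
  have hceil : ⌈x / (ρ * 2 ^ j)⌉₊ ≤ δ := Nat.ceil_le.mpr ((div_le_iff₀ hunit).mpr hδ)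
  gcongr

theorem add_le_roundDist (hρ : 0 < ρ) (j : ℤ) (x : ℝ) :
    x + 69 * (ρ * 2 ^ j) ≤ roundDist ρ j x := by
  have hunit : 0 < ρ * 2 ^ j := by positivity
  have hceil : x ≤ ⌈x / (ρ * 2 ^ j)⌉₊ * (ρ * 2 ^ j) := (div_le_iff₀ hunit).mp (Nat.le_ceil _)
  rw [roundDist_eq_natCeil hρ, add_mul]
  linarith

theorem roundDist_lt_add (hρ : 0 < ρ) (j : ℤ) {x : ℝ} (hx : 0 ≤ x) :
    roundDist ρ j x < x + 70 * (ρ * 2 ^ j) :=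
  calc roundDist ρ j x
      = (69 + (⌈x / (ρ * 2 ^ j)⌉₊ : ℝ)) * (ρ * 2 ^ j) := roundDist_eq_natCeil hρ j x
    _ < (69 + (x / (ρ * 2 ^ j) + 1)) * (ρ * 2 ^ j) := by
        gcongr
        exact Nat.ceil_lt_add_one (by positivity)
    _ = x + 70 * (ρ * 2 ^ j) := by
        field_simp
        ring

theorem roundDist_nonneg (hρ : 0 < ρ) (j : ℤ) (x : ℝ) : 0 ≤ roundDist ρ j x := by
  rw [roundDist_eq_natCeil hρ]
  positivity

theorem add_le_roundDist_of_lt (hρ : 0 < ρ) {i j : ℤ} (hij : i < j) (x : ℝ) :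
    x + 138 * (ρ * 2 ^ i) ≤ roundDist ρ j x := by
  have hpow : (2 : ℝ) ^ (i + 1) ≤ 2 ^ j := zpow_le_zpow_right₀ one_le_two hij
  calc x + 138 * (ρ * 2 ^ i)
      = x + 69 * (ρ * 2 ^ (i + 1)) := by
        rw [zpow_add_one₀ two_ne_zero]
        ring
    _ ≤ x + 69 * (ρ * 2 ^ j) := by gcongr
    _ ≤ roundDist ρ j x := add_le_roundDist hρ j x

end roundDist

section roundedInterfaceDist

variable {V : Type*} [PseudoMetricSpace V] {ρ : ℝ}

/-- The interface-respecting distance `dist'(v, u)`: the length of a shortest route from `v` to `u`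
through the interface `I`, with the part after the interface rounded at level `i`. It is an infimum
because `I` may be infinite; for `I = ∅` it has the junk value `0`. -/
noncomputable def roundedInterfaceDist (ρ : ℝ) (i : ℤ) (I : Set V) (v u : V) : ℝ :=
  ⨅ p : I, (dist v p + roundDist ρ i (dist (p : V) u))

theorem inf'_eq_roundedInterfaceDist (ρ : ℝ) (i : ℤ) (I : Finset V) (hI : I.Nonempty) (v u : V) :
    (I.inf' hI fun p => dist v p + roundDist ρ i (dist p u)) = roundedInterfaceDist ρ i I v u :=
  (Finset.inf'_eq_csInf_image I hI _).trans sInf_image'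

theorem roundedInterfaceDist_le (hρ : 0 < ρ) (i : ℤ) {I : Set V} {p : V} (hp : p ∈ I) (v u : V) :
    roundedInterfaceDist ρ i I v u ≤ dist v p + roundDist ρ i (dist p u) := by
  refine ciInf_le ⟨0, ?_⟩ (⟨p, hp⟩ : I)
  rintro _ ⟨q, rfl⟩
  exact add_nonneg dist_nonneg (roundDist_nonneg hρ i _)

theorem roundedInterfaceDist_lt_add (hρ : 0 < ρ) (i : ℤ) {I : Set V} {p : V} (hp : p ∈ I)
    (v u : V) :
    roundedInterfaceDist ρ i I v u < dist v p + dist p u + 70 * (ρ * 2 ^ i) :=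
  calc roundedInterfaceDist ρ i I v u
      ≤ dist v p + roundDist ρ i (dist p u) := roundedInterfaceDist_le hρ i hp v u
    _ < dist v p + (dist p u + 70 * (ρ * 2 ^ i)) := by
        gcongr
        exact roundDist_lt_add hρ i dist_nonneg
    _ = dist v p + dist p u + 70 * (ρ * 2 ^ i) := (add_assoc _ _ _).symm

theorem dist_add_le_dist_add_roundDist (hρ : 0 < ρ) {i j : ℤ} (hij : i < j) (v p u : V) :
    dist v u + 138 * (ρ * 2 ^ i) ≤ dist v p + roundDist ρ j (dist p u) :=
  calc dist v u + 138 * (ρ * 2 ^ i)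
      ≤ dist v p + dist p u + 138 * (ρ * 2 ^ i) := by
        gcongr
        exact dist_triangle v p u
    _ = dist v p + (dist p u + 138 * (ρ * 2 ^ i)) := add_assoc _ _ _
    _ ≤ dist v p + roundDist ρ j (dist p u) := by
        gcongr
        exact add_le_roundDist_of_lt hρ hij _

theorem rounded_interface_dist_general (hρ : 0 < ρ) (i : ℤ) (I : Set V) (u v : V)
    (hI : ∃ p ∈ I, dist v p + dist p u ≤ dist v u + 68 * ρ * 2 ^ i) :
    roundedInterfaceDist ρ i I v u ≤ dist v u + 138 * ρ * 2 ^ i ∧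
    ∀ j : ℤ, i + 1 ≤ j → ∀ p : V,
      roundedInterfaceDist ρ i I v u ≤ dist v p + roundDist ρ j (dist p u) := by
  obtain ⟨p', hp'I, hp'⟩ := hI
  have hdist : roundedInterfaceDist ρ i I v u ≤ dist v u + 138 * (ρ * 2 ^ i) := by
    linarith [roundedInterfaceDist_lt_add hρ i hp'I v u]
  exact ⟨by rwa [mul_assoc],
    fun j hij p => hdist.trans (dist_add_le_dist_add_roundDist hρ hij v p u)⟩

end roundedInterfaceDist

/-- bounds on the rounded interface-respecting distance (Lemma "dist'"). -/
theorem rounded_interface_dist {V : Type*} [MetricSpace V] (ρ : ℝ) (hρ : 0 < ρ)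
    (i : ℤ) (hi : 1 ≤ i) (I : Finset V) (hI : I.Nonempty)
    (u v : V) (huv : u ≠ v)
    (hp' : ∃ p' ∈ I, dist v p' + dist p' u ≤ dist v u + 68 * ρ * 2 ^ i) :
    (I.inf' hI fun p => dist v p + roundDist ρ i (dist p u)) ≤ dist v u + 138 * ρ * 2 ^ i ∧
    ∀ j : ℤ, i + 1 ≤ j → ∀ p : V,
      (I.inf' hI fun p => dist v p + roundDist ρ i (dist p u)) ≤
        dist v p + roundDist ρ j (dist p u) := by
  rw [inf'_eq_roundedInterfaceDist]
  exact rounded_interface_dist_general hρ i I u v hp'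
end

section
/- Let φ be a CNF formula over variables x_1,…,x_k (k ≥ 1) with clauses C_1,…,C_ℓ, let c > 4 be a real number, and let q ≥ 1 be an integer. Let (V,dist) be a metric space containing pairwise distinct points t_1,…,t_k, u_1,…,u_k, f_1,…,f_k, v_1,…,v_ℓ, and set F = {t_1,f_1,…,t_k,f_k}. Assume: (i) for every variable index x, dist(u_x,t_x) = dist(u_x,f_x) = 1, and for every g ∈ F, dist(u_x,g) ≥ 1 with equality only if g ∈ {t_x,f_x}; (ii) for every clause index i, dist(v_i,g) = (11c)^i for every literal facility g of C_i, and for every g ∈ F, dist(v_i,g) ≥ (11c)^i with equality only if g is a literal facility of C_i. Then φ is satisfiable if and only if there exists S ⊆ F with |S| ≤ k and Σ_{x=1}^{k} dist(u_x,S)^q + Σ_{i=1}^{ℓ} dist(v_i,S)^q ≤ k + Σ_{i=1}^{ℓ} (11c)^{iq}. -/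
/-!
No client can be served more cheaply than at its radius, and the budget is exactly the sum of the
`q`-th powers of the radii. Hence a solution within budget serves every client exactly at its
radius. For the variable clients this means that one of `t x`, `f x` is open for every `x`; as at
most `k` facilities are open, exactly one is, and the solution is an assignment. For the clause
clients it means that this assignment makes a literal of every clause true.
-/

/-- A client pays `cost g` to be served by the facility `g`. Its radius `ρ` is a lower bound for the
cost of every facility in `F`, and among these exactly those in `N` attain it. With `cost` the
distance from a client this is condition (i) or (ii); `N` need not be a subset of `F`. -/
def HasNearestFacilities {V : Type*} (cost : V → ℝ) (F : Finset V) (ρ : ℝ) (N : Set V) : Prop :=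
  (∀ g ∈ N, cost g = ρ) ∧ ∀ g ∈ F, ρ ≤ cost g ∧ (cost g = ρ → g ∈ N)

namespace HasNearestFacilities

variable {V : Type*} {F S : Finset V}

theorem le_inf' {cost : V → ℝ} {ρ : ℝ} {N : Set V} (h : HasNearestFacilities cost F ρ N)
    (hSF : S ⊆ F) (hS : S.Nonempty) : ρ ≤ S.inf' hS cost :=
  Finset.le_inf' _ _ fun g hg => (h.2 g (hSF hg)).1

theorem inf'_eq_iff {cost : V → ℝ} {ρ : ℝ} {N : Set V} (h : HasNearestFacilities cost F ρ N)
    (hSF : S ⊆ F) (hS : S.Nonempty) : S.inf' hS cost = ρ ↔ ∃ g ∈ S, g ∈ N := by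
  constructor
  · intro hρ
    obtain ⟨g, hgS, hg⟩ := Finset.exists_mem_eq_inf' hS cost
    exact ⟨g, hgS, (h.2 g (hSF hgS)).2 (hg.symm.trans hρ)⟩
  · rintro ⟨g, hgS, hgN⟩
    exact le_antisymm (Finset.inf'_le_of_le _ hgS (h.1 g hgN).le) (h.le_inf' hSF hS)

theorem sum_inf'_pow_le_iff {J : Type*} [Fintype J] {cost : J → V → ℝ} {ρ : J → ℝ}
    {N : J → Set V} (h : ∀ j, HasNearestFacilities (cost j) F (ρ j) (N j)) (hρ : ∀ j, 0 ≤ ρ j)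
    {q : ℕ} (hq : q ≠ 0) (hSF : S ⊆ F) (hS : S.Nonempty) :
    ∑ j, S.inf' hS (cost j) ^ q ≤ ∑ j, ρ j ^ q ↔ ∀ j, ∃ g ∈ S, g ∈ N j := by
  have radius_le (j : J) : ρ j ≤ S.inf' hS (cost j) := (h j).le_inf' hSF hS
  have pow_le (j : J) : ρ j ^ q ≤ S.inf' hS (cost j) ^ q := pow_le_pow_left₀ (hρ j) (radius_le j) q
  calc ∑ j, S.inf' hS (cost j) ^ q ≤ ∑ j, ρ j ^ q
      ↔ ∑ j, ρ j ^ q = ∑ j, S.inf' hS (cost j) ^ q :=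
        (Finset.sum_le_sum fun j _ => pow_le j).ge_iff_eq
    _ ↔ ∀ j, ρ j ^ q = S.inf' hS (cost j) ^ q := by
        simpa using Finset.sum_eq_sum_iff_of_le fun j (_ : j ∈ Finset.univ) => pow_le j
    _ ↔ ∀ j, ∃ g ∈ S, g ∈ N j := forall_congr' fun j => by
        rw [pow_left_inj₀ (hρ j) ((hρ j).trans (radius_le j)) hq, eq_comm,
          (h j).inf'_eq_iff hSF hS]

theorem sum_inf'_pow_add_sum_inf'_pow_le_iff {I J : Type*} [Fintype I] [Fintype J]
    {cost₁ : I → V → ℝ} {ρ₁ : I → ℝ} {N₁ : I → Set V} {cost₂ : J → V → ℝ} {ρ₂ : J → ℝ}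
    {N₂ : J → Set V} (h₁ : ∀ i, HasNearestFacilities (cost₁ i) F (ρ₁ i) (N₁ i))
    (h₂ : ∀ j, HasNearestFacilities (cost₂ j) F (ρ₂ j) (N₂ j)) (hρ₁ : ∀ i, 0 ≤ ρ₁ i)
    (hρ₂ : ∀ j, 0 ≤ ρ₂ j) {q : ℕ} (hq : q ≠ 0) (hSF : S ⊆ F) (hS : S.Nonempty) :
    ∑ i, S.inf' hS (cost₁ i) ^ q + ∑ j, S.inf' hS (cost₂ j) ^ q ≤ ∑ i, ρ₁ i ^ q + ∑ j, ρ₂ j ^ q ↔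
      (∀ i, ∃ g ∈ S, g ∈ N₁ i) ∧ ∀ j, ∃ g ∈ S, g ∈ N₂ j := by
  have h : ∀ z, HasNearestFacilities (Sum.elim cost₁ cost₂ z) F (Sum.elim ρ₁ ρ₂ z)
      (Sum.elim N₁ N₂ z) := Sum.rec h₁ h₂
  have hρ : ∀ z, 0 ≤ Sum.elim ρ₁ ρ₂ z := Sum.rec hρ₁ hρ₂
  simpa only [Fintype.sum_sum_type, Sum.forall, Sum.elim_inl, Sum.elim_inr]
    using sum_inf'_pow_le_iff h hρ hq hSF hS

end HasNearestFacilities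

section Satisfiability

variable {ι κ V : Type*} [Fintype ι] {lit : ι × Bool → V}

theorem exists_assignment_of_card_le (hlit : Function.Injective lit) {S : Finset V}
    (hcard : S.card ≤ Fintype.card ι) (hS : ∀ x, ∃ b, lit (x, b) ∈ S) :
    ∃ α : ι → Bool, ∀ p, lit p ∈ S → α p.1 = p.2 := by
  classical
  choose α hα using hS
  have chosen_injective : Function.Injective fun x => lit (x, α x) :=
    fun x y hxy => congrArg Prod.fst (hlit hxy)
  have image_eq : Finset.univ.image (fun x => lit (x, α x)) = S :=
    Finset.eq_of_subset_of_card_le (Finset.image_subset_iff.2 fun x _ => hα x)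
      (by rwa [Finset.card_image_of_injective _ chosen_injective, Finset.card_univ])
  refine ⟨α, fun p hp => ?_⟩
  obtain ⟨x, -, hx⟩ := Finset.mem_image.1 (image_eq ▸ hp)
  obtain rfl : (x, α x) = p := hlit hx
  rfl

theorem satisfiable_iff_exists_hitting_facilities [Nonempty ι] (hlit : Function.Injective lit)
    {F : Finset V} (hF : ∀ p, lit p ∈ F) (C : κ → Finset (ι × Bool)) :
    (∃ α : ι → Bool, ∀ i, ∃ p ∈ C i, α p.1 = p.2) ↔
      ∃ S : Finset V, S.Nonempty ∧ S ⊆ F ∧ S.card ≤ Fintype.card ι ∧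
        (∀ x, ∃ b, lit (x, b) ∈ S) ∧ ∀ i, ∃ p ∈ C i, lit p ∈ S := by
  classical
  constructor
  · rintro ⟨α, hα⟩
    have chosen_mem (x : ι) : lit (x, α x) ∈ Finset.univ.image fun x => lit (x, α x) :=
      Finset.mem_image_of_mem _ (Finset.mem_univ x)
    refine ⟨Finset.univ.image fun x => lit (x, α x), Finset.univ_nonempty.image _,
      Finset.image_subset_iff.2 fun x _ => hF _, Finset.card_image_le,
      fun x => ⟨α x, chosen_mem x⟩, fun i => ?_⟩
    obtain ⟨p, hp, hαp⟩ := hα i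
    exact ⟨p, hp, by simpa only [hαp] using chosen_mem p.1⟩
  · rintro ⟨S, -, -, hcard, hvar, hclause⟩
    obtain ⟨α, hα⟩ := exists_assignment_of_card_le hlit hcard hvar
    refine ⟨α, fun i => ?_⟩
    obtain ⟨p, hp, hpS⟩ := hclause i
    exact ⟨p, hp, hα p hpS⟩

theorem sat_reduction_kClustering_general [Nonempty ι] [Fintype κ] (C : κ → Finset (ι × Bool))
    {q : ℕ} (hq : q ≠ 0) (hlit : Function.Injective lit) {F : Finset V} (hF : ∀ p, lit p ∈ F)
    {varCost : ι → V → ℝ} {ρ : ι → ℝ} (hρ : ∀ x, 0 ≤ ρ x)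
    (hvar : ∀ x, HasNearestFacilities (varCost x) F (ρ x) {lit (x, true), lit (x, false)})
    {clauseCost : κ → V → ℝ} {r : κ → ℝ} (hr : ∀ i, 0 ≤ r i)
    (hclause : ∀ i, HasNearestFacilities (clauseCost i) F (r i) (lit '' C i)) :
    (∃ α : ι → Bool, ∀ i, ∃ p ∈ C i, α p.1 = p.2) ↔
      ∃ S : Finset V, ∃ hS : S.Nonempty, S ⊆ F ∧ S.card ≤ Fintype.card ι ∧
        ∑ x, S.inf' hS (varCost x) ^ q + ∑ i, S.inf' hS (clauseCost i) ^ q ≤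
          ∑ x, ρ x ^ q + ∑ i, r i ^ q := by
  rw [satisfiable_iff_exists_hitting_facilities hlit hF C]
  refine exists_congr fun S => exists_prop.symm.trans <| exists_congr fun hS =>
    and_congr_right fun hSF => and_congr_right fun _ => ?_
  rw [HasNearestFacilities.sum_inf'_pow_add_sum_inf'_pow_le_iff hvar hclause hρ hr hq hSF hS]
  refine and_congr (forall_congr' fun x => ?_) (forall_congr' fun i => ?_)
  · simp only [Bool.exists_bool, Set.mem_insert_iff, Set.mem_singleton_iff, and_or_left, exists_or,
      exists_eq_right, or_comm]
  · exact Set.exists_mem_image.symm.trans (exists_congr fun _ => and_comm)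

end Satisfiability

section LiteralFacility

variable {ι V : Type*} {t f : ι → V}

/-- The facility that opens the literal `p`, where `p.2 = true` encodes a positive literal. -/
def literalFacility (t f : ι → V) (p : ι × Bool) : V :=
  bif p.2 then t p.1 else f p.1

theorem literalFacility_injective (ht : Function.Injective t) (hf : Function.Injective f)
    (htf : ∀ x y, t x ≠ f y) : Function.Injective (literalFacility t f) := by
  rintro ⟨x, _ | _⟩ ⟨y, _ | _⟩ h
  · exact congrArg (·, false) (hf h)
  · exact absurd h.symm (htf y x)
  · exact absurd h (htf x y)
  · exact congrArg (·, true) (ht h)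

theorem literalFacility_mem [Fintype ι] [DecidableEq V] (p : ι × Bool) :
    literalFacility t f p ∈ Finset.univ.image t ∪ Finset.univ.image f := by
  rcases p with ⟨x, _ | _⟩ <;> simp [literalFacility]

theorem mem_image_literalFacility {K : Finset (ι × Bool)} {g : V} :
    g ∈ literalFacility t f '' K ↔
      ∃ p ∈ K, (p.2 = true ∧ g = t p.1) ∨ (p.2 = false ∧ g = f p.1) := by
  refine exists_congr fun ⟨x, b⟩ => and_congr_right fun _ => ?_
  cases b <;> simp [literalFacility, eq_comm]

end LiteralFacility

/-- correctness of the SAT reduction for k-Clustering^q. -/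
theorem sat_reduction_kClustering {V : Type*} [MetricSpace V] [DecidableEq V]
    (k ℓ : ℕ) (hk : 1 ≤ k) (C : Fin ℓ → Finset (Fin k × Bool))
    (c : ℝ) (hc : 4 < c) (q : ℕ) (hq : 1 ≤ q)
    (t u f : Fin k → V) (v : Fin ℓ → V)
    (hinj : Function.Injective (fun z : (Fin k ⊕ Fin k ⊕ Fin k) ⊕ Fin ℓ =>
      match z with
      | .inl (.inl x) => t x
      | .inl (.inr (.inl x)) => u x
      | .inl (.inr (.inr x)) => f x
      | .inr i => v i))
    (F : Finset V) (hF : F = Finset.image t Finset.univ ∪ Finset.image f Finset.univ)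
    (hi : ∀ x : Fin k, dist (u x) (t x) = 1 ∧ dist (u x) (f x) = 1 ∧
      ∀ g ∈ F, 1 ≤ dist (u x) g ∧ (dist (u x) g = 1 → g = t x ∨ g = f x))
    (hii : ∀ i : Fin ℓ,
      (∀ g : V, (∃ p ∈ C i, (p.2 = true ∧ g = t p.1) ∨ (p.2 = false ∧ g = f p.1)) →
        dist (v i) g = (11 * c) ^ (i.1 + 1)) ∧
      ∀ g ∈ F, (11 * c) ^ (i.1 + 1) ≤ dist (v i) g ∧
        (dist (v i) g = (11 * c) ^ (i.1 + 1) →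
          ∃ p ∈ C i, (p.2 = true ∧ g = t p.1) ∨ (p.2 = false ∧ g = f p.1))) :
    (∃ α : Fin k → Bool, ∀ i : Fin ℓ, ∃ p ∈ C i, α p.1 = p.2) ↔
    (∃ S : Finset V, ∃ hS : S.Nonempty, S ⊆ F ∧ S.card ≤ k ∧
      (∑ x : Fin k, (S.inf' hS fun g => dist (u x) g) ^ q) +
      (∑ i : Fin ℓ, (S.inf' hS fun g => dist (v i) g) ^ q) ≤
        (k : ℝ) + ∑ i : Fin ℓ, ((11 * c) ^ (i.1 + 1)) ^ q) := by
  subst hF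
  simp only [← mem_image_literalFacility] at hii
  have : Nonempty (Fin k) := ⟨⟨0, hk⟩⟩
  have hlit : Function.Injective (literalFacility t f) := literalFacility_injective
    (hinj.comp (Sum.inl_injective.comp Sum.inl_injective))
    (hinj.comp (Sum.inl_injective.comp (Sum.inr_injective.comp Sum.inr_injective)))
    (fun x y => hinj.ne (a₁ := .inl (.inl x)) (a₂ := .inl (.inr (.inr y))) (by simp))
  simpa using sat_reduction_kClustering_general C (Nat.one_le_iff_ne_zero.1 hq) hlit
    literalFacility_mem (fun _ => zero_le_one)
    (fun x => ⟨Set.forall_insert_of_forall (forall_eq.2 (hi x).2.1) (hi x).1, (hi x).2.2⟩)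
    (fun i => by positivity) hii
end
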